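/- arXiv:2505.00503 — 3 statements merged into one kernel-verified Lean document; each statement's English description precedes it below -/
import Mathlib

section
/- Under the stated setup and integrability/support assumptions, the expected log marginal density satisfies the variational lower bound: ∫_S log d(s) dμ(s) ≥ ∫_S ∫_Z q₁(s,z) log g(z,s) dλ_Z(z) dμ(s) − KL(q₂‖p) − ∫_S KL(q₁(s,·)‖q₂) dμ(s). -/
/-!
The gap in the bound is `∫ KL(q₁(s,·) ‖ r(·|s)) dμ`, where `r(z|s) = p z * g z s / d s`.
With `log t ≤ t - 1` in place of nonnegativity of that divergence, the claim becomes the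
inequality of functions on `S × Z` in `elbo_pointwise`, valid a.e. by the support condition:
`q₁ log g - q₁ log (q₂ / p) - q₁ log (q₁ / q₂) + q₁ - p g / d ≤ q₁ log d`.
Integrating against `μ ⊗ lamZ`, the terms `q₁` and `p g / d` both contribute `1` and cancel.
The term `q₁ log (q₂ / p)` is integrated over `s` first, where marginal matching turns it into
`q₂ log (q₂ / p)`; the other terms are integrated over `z` first.
-/

open MeasureTheory

/-- A weight `q` on `X × Y` times a function `f` of `y` alone has integral `∫ m f`, where `m` is the
`Y`-marginal of `q`. -/
lemma integral_weight_mul {X Y : Type*} [MeasurableSpace X] [MeasurableSpace Y]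
    {μ : Measure X} {ν : Measure Y} [SFinite μ] [SFinite ν]
    {q : X × Y → ℝ} (hq : Integrable q (μ.prod ν)) (hq0 : ∀ x, 0 ≤ q x)
    {m f : Y → ℝ} (hm : ∀ᵐ y ∂ν, ∫ x, q (x, y) ∂μ = m y)
    (hf : AEStronglyMeasurable f ν) (hmf : Integrable (fun y => m y * |f y|) ν) :
    Integrable (fun w : X × Y => q w * f w.2) (μ.prod ν) ∧
      ∫ w, q w * f w.2 ∂(μ.prod ν) = ∫ y, m y * f y ∂ν := by
  have hI : Integrable (fun w : X × Y => q w * f w.2) (μ.prod ν) := by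
    refine (integrable_prod_iff' (hq.aestronglyMeasurable.mul hf.comp_snd)).2
      ⟨?_, hmf.congr ?_⟩
    · filter_upwards [hq.prod_left_ae] with y hy
      exact hy.mul_const (f y)
    · filter_upwards [hm] with y hy
      simp only [Pi.mul_apply, norm_mul, Real.norm_eq_abs, abs_of_nonneg (hq0 _)]
      rw [integral_mul_const, hy]
  refine ⟨hI, ?_⟩
  rw [integral_prod_symm _ hI]
  refine integral_congr_ae ?_
  filter_upwards [hm] with y hy
  rw [integral_mul_const, hy]

lemma elbo_pointwise {a b p g d : ℝ} (ha : 0 ≤ a) (hp : 0 ≤ p) (hg : 0 ≤ g)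
    (hd : 0 < d) (h : p * g = 0 ∨ b = 0 → a = 0) :
    a * Real.log g - a * Real.log (b / p) - a * Real.log (a / b) + a - p * g / d
      ≤ a * Real.log d := by
  rcases ha.eq_or_lt with rfl | ha
  · have : 0 ≤ p * g / d := by positivity
    simpa using this
  · have hb' : b ≠ 0 := fun hb0 => ha.ne' (h (Or.inr hb0))
    have hpg : p * g ≠ 0 := fun h0 => ha.ne' (h (Or.inl h0))
    have hp' := left_ne_zero_of_mul hpg
    have hg' := right_ne_zero_of_mul hpg
    have hpos : 0 < p * g / (d * a) := by positivity
    have key := mul_le_mul_of_nonneg_left (Real.log_le_sub_one_of_pos hpos) ha.le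
    rw [Real.log_div hpg (by positivity), Real.log_mul hp' hg', Real.log_mul hd.ne' ha.ne'] at key
    rw [Real.log_div hb' hp', Real.log_div ha.ne' hb']
    have e : a * (p * g / (d * a) - 1) = p * g / d - a := by field_simp
    rw [e] at key
    linarith

/-- **Variational lower bound (ELBO-style) for the expected log marginal density.**
Setup: σ-finite measure spaces `(S, lamS)` and `(Z, lamZ)`; a prior density `p` on `Z`;
a decoder `g` with `g z ·` a density on `S` for every `z`; joint `π(z,s) = p z * g z s`;
marginal `d s = ∫ z, p z * g z s`; posterior `r z s = p z * g z s / d s` when `d s > 0`;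
a probability measure `μ` on `S` with `d > 0` μ-a.e.; an encoder `q₁` with `q₁ s ·` a
density on `Z` for every `s`; a density `q₂` on `Z` matching the μ-marginal of `q₁`.
Conclusion: `∫ log d dμ ≥ ∫∫ q₁ log g - KL(q₂‖p) - ∫ KL(q₁(s,·)‖q₂) dμ`. -/
theorem dasp_variational_lower_bound
    {S Z : Type*} [MeasurableSpace S] [MeasurableSpace Z]
    (lamS : Measure S) (lamZ : Measure Z) [SigmaFinite lamS] [SigmaFinite lamZ]
    -- prior density p on Z
    (p : Z → ℝ) (hp_meas : Measurable p) (hp_nonneg : ∀ z, 0 ≤ p z)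
    (hp_one : ∫ z, p z ∂lamZ = 1)
    -- decoder g : Z × S → [0,∞), g z · a probability density on S for each z
    (g : Z → S → ℝ) (hg_meas : Measurable (Function.uncurry g))
    (hg_nonneg : ∀ z s, 0 ≤ g z s) (hg_one : ∀ z, ∫ s, g z s ∂lamS = 1)
    -- marginal d and posterior r
    (d : S → ℝ) (hd : ∀ s, d s = ∫ z, p z * g z s ∂lamZ)
    (r : Z → S → ℝ) (hr : ∀ z s, 0 < d s → r z s = p z * g z s / d s)
    -- probability measure μ on S with d > 0 μ-a.e.
    (μ : Measure S) [IsProbabilityMeasure μ] (hd_pos : ∀ᵐ s ∂μ, 0 < d s)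
    -- encoder q₁, q₁ s · a probability density on Z for each s
    (q₁ : S → Z → ℝ) (hq₁_meas : Measurable (Function.uncurry q₁))
    (hq₁_nonneg : ∀ s z, 0 ≤ q₁ s z) (hq₁_one : ∀ s, ∫ z, q₁ s z ∂lamZ = 1)
    -- density q₂ on Z
    (q₂ : Z → ℝ) (hq₂_meas : Measurable q₂) (hq₂_nonneg : ∀ z, 0 ≤ q₂ z)
    (hq₂_one : ∫ z, q₂ z ∂lamZ = 1)
    -- marginal-matching condition
    (hmatch : ∀ᵐ z ∂lamZ, ∫ s, q₁ s z ∂μ = q₂ z)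
    -- support condition: q₁ vanishes (a.e.) where the joint or q₂ vanishes
    (hsupp : ∀ᵐ sz ∂(μ.prod lamZ),
      (p sz.2 * g sz.2 sz.1 = 0 ∨ q₂ sz.2 = 0) → q₁ sz.1 sz.2 = 0)
    -- integrability assumptions
    (hint_g : Integrable
      (fun sz : S × Z => q₁ sz.1 sz.2 * |Real.log (g sz.2 sz.1)|) (μ.prod lamZ))
    (hint_q₂ : Integrable
      (fun sz : S × Z => q₁ sz.1 sz.2 * |Real.log (q₁ sz.1 sz.2 / q₂ sz.2)|) (μ.prod lamZ))
    (hint_r : Integrable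
      (fun sz : S × Z => q₁ sz.1 sz.2 * |Real.log (q₁ sz.1 sz.2 / r sz.2 sz.1)|) (μ.prod lamZ))
    (hint_p : Integrable (fun z => q₂ z * |Real.log (q₂ z / p z)|) lamZ)
    (hlogd : Integrable (fun s => Real.log (d s)) μ) :
    ∫ s, Real.log (d s) ∂μ ≥
      (∫ s, ∫ z, q₁ s z * Real.log (g z s) ∂lamZ ∂μ)
        - (∫ z, q₂ z * Real.log (q₂ z / p z) ∂lamZ)
        - ∫ s, ∫ z, q₁ s z * Real.log (q₁ s z / q₂ z) ∂lamZ ∂μ := by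
  have hq₁_int : Integrable (fun w : S × Z => q₁ w.1 w.2) (μ.prod lamZ) := by
    refine (integrable_prod_iff hq₁_meas.aestronglyMeasurable).2
      ⟨.of_forall fun s => ?_, ?_⟩
    · exact .of_integral_ne_zero (by simp [hq₁_one s])
    · simp [abs_of_nonneg (hq₁_nonneg _ _), hq₁_one]
  have hq₁_total : ∫ w : S × Z, q₁ w.1 w.2 ∂(μ.prod lamZ) = 1 := by
    rw [integral_prod _ hq₁_int]
    simp [hq₁_one]
  have hpg_meas : Measurable (fun w : S × Z => p w.2 * g w.2 w.1) :=
    (hp_meas.comp measurable_snd).mul (hg_meas.comp measurable_swap)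
  have hd_meas : Measurable d := by
    rw [funext hd]
    exact hpg_meas.stronglyMeasurable.integral_prod_right'.measurable
  have hslice : ∀ᵐ s ∂μ, ∫ z, p z * g z s / d s ∂lamZ = 1 := by
    filter_upwards [hd_pos] with s hs
    rw [integral_div, ← hd, div_self hs.ne']
  have hr_int : Integrable (fun w : S × Z => p w.2 * g w.2 w.1 / d w.1) (μ.prod lamZ) := by
    refine (integrable_prod_iff
      (hpg_meas.div (hd_meas.comp measurable_fst)).aestronglyMeasurable).2
      ⟨?_, (integrable_const (1 : ℝ)).congr ?_⟩
    · filter_upwards [hslice] with s hs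
      exact .of_integral_ne_zero (by simp [hs])
    · filter_upwards [hslice, hd_pos] with s hs hs0
      rw [← hs]
      refine integral_congr_ae (.of_forall fun z => ?_)
      exact (Real.norm_of_nonneg
        (div_nonneg (mul_nonneg (hp_nonneg z) (hg_nonneg z s)) hs0.le)).symm
  have hr_total : ∫ w : S × Z, p w.2 * g w.2 w.1 / d w.1 ∂(μ.prod lamZ) = 1 := by
    rw [integral_prod _ hr_int, integral_congr_ae hslice]
    simp
  have of_abs : ∀ f : S × Z → ℝ, Measurable f →
      Integrable (fun w => q₁ w.1 w.2 * |f w|) (μ.prod lamZ) →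
      Integrable (fun w => q₁ w.1 w.2 * f w) (μ.prod lamZ) := by
    intro f hf h
    refine h.mono (hq₁_meas.mul hf).aestronglyMeasurable (.of_forall fun w => ?_)
    simp
  have hA := of_abs (fun w => Real.log (g w.2 w.1))
    (hg_meas.comp measurable_swap).log hint_g
  have hC := of_abs (fun w => Real.log (q₁ w.1 w.2 / q₂ w.2))
    (hq₁_meas.div (hq₂_meas.comp measurable_snd)).log hint_q₂
  obtain ⟨hB, hB_eq⟩ := integral_weight_mul hq₁_int (fun w => hq₁_nonneg w.1 w.2) hmatch
    (hq₂_meas.div hp_meas).log.aestronglyMeasurable hint_p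
  -- The same lemma with the factors swapped, the `S`-marginal of `q₁` being the constant `1`.
  obtain ⟨hD', hD_eq'⟩ := integral_weight_mul (q := fun w : Z × S => q₁ w.2 w.1) (m := fun _ => 1)
    hq₁_int.swap (fun w => hq₁_nonneg w.2 w.1) (.of_forall hq₁_one)
    hlogd.aestronglyMeasurable (by simpa using hlogd.abs)
  have hD : Integrable (fun w : S × Z => q₁ w.1 w.2 * Real.log (d w.1)) (μ.prod lamZ) := hD'.swap
  have hD_eq : ∫ w : S × Z, q₁ w.1 w.2 * Real.log (d w.1) ∂(μ.prod lamZ)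
      = ∫ s, Real.log (d s) ∂μ := by
    rw [← integral_prod_swap] at hD_eq'
    simpa using hD_eq'
  have hd_pos' : ∀ᵐ w ∂(μ.prod lamZ), 0 < d w.1 :=
    Measure.quasiMeasurePreserving_fst.ae hd_pos
  have hle := integral_mono_ae ((((hA.sub hB).sub hC).add hq₁_int).sub hr_int) hD (by
    filter_upwards [hsupp, hd_pos'] with w hw hdw
    exact elbo_pointwise (hq₁_nonneg _ _) (hp_nonneg _) (hg_nonneg _ _) hdw hw)
  rw [integral_sub' (((hA.sub hB).sub hC).add hq₁_int) hr_int,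
    integral_add' ((hA.sub hB).sub hC) hq₁_int, integral_sub' (hA.sub hB) hC,
    integral_sub' hA hB, hB_eq, hD_eq, hq₁_total, hr_total,
    integral_prod _ hA, integral_prod _ hC] at hle
  simp only [Pi.div_apply] at hle
  linarith
end

section
/- Under the stated setup and integrability/support assumptions, the expected log marginal density decomposes exactly as: ∫_S log d(s) dμ(s) = ∫_S ∫_Z q₁(s,z) log g(z,s) dλ_Z(z) dμ(s) − KL(q₂‖p) + ∫_S ( KL(q₁(s,·)‖r(·|s)) − KL(q₁(s,·)‖q₂) ) dμ(s). -/
/-!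
On the set where `q₁ > 0` the support condition makes `p`, `g`, `q₂` positive, so there
`log d = log g - log (q₂ / p) + log (q₁ / r) - log (q₁ / q₂)` holds pointwise. Multiplying by `q₁`
and integrating over `μ ⊗ lamZ` yields the decomposition by Fubini: `∫ q₁ s z dz = 1` collapses the
left side to `∫ log d dμ`, and marginal matching collapses the `log (q₂ / p)` term to `KL(q₂‖p)`.
The integrability that Fubini needs in these two steps is `integrable_mul_fst_of_marginal` and
`integrable_mul_snd_of_marginal`.
-/

open MeasureTheory

/-- A function of the first variable weighted by a kernel density is integrable on the product. -/
lemma integrable_mul_fst_of_marginal {S Z : Type*} [MeasurableSpace S] [MeasurableSpace Z]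
    {μ : Measure S} {ν : Measure Z} [SFinite μ] [SFinite ν] {q : S → Z → ℝ}
    (hqm : Measurable (Function.uncurry q)) (hq : ∀ s z, 0 ≤ q s z)
    (hq1 : ∀ s, ∫ z, q s z ∂ν = 1) {f : S → ℝ} (hf : Integrable f μ) :
    Integrable (fun x : S × Z => q x.1 x.2 * f x.1) (μ.prod ν) := by
  have hm : AEStronglyMeasurable (fun x : S × Z => q x.1 x.2 * f x.1) (μ.prod ν) :=
    hqm.aestronglyMeasurable.mul hf.aestronglyMeasurable.comp_fst
  rw [integrable_prod_iff hm]
  refine ⟨Filter.Eventually.of_forall fun s => ?_, ?_⟩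
  · exact (Integrable.of_integral_ne_zero (by rw [hq1 s]; exact one_ne_zero)).mul_const (f s)
  · simpa [abs_mul, abs_of_nonneg (hq _ _), integral_mul_const, hq1] using hf.abs

/-- A function of the second variable weighted by `q` is integrable on the product as soon as it is
integrable against the second marginal `m` of `q`. Integrability of `q` is needed because the
marginal identity alone is vacuous at points where the section of `q` is not integrable. -/
lemma integrable_mul_snd_of_marginal {S Z : Type*} [MeasurableSpace S] [MeasurableSpace Z]
    {μ : Measure S} {ν : Measure Z} [SFinite μ] [SFinite ν] {q : S → Z → ℝ}
    (hqi : Integrable (fun x : S × Z => q x.1 x.2) (μ.prod ν)) (hq : ∀ s z, 0 ≤ q s z)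
    {m : Z → ℝ} (hm : ∀ᵐ z ∂ν, ∫ s, q s z ∂μ = m z) {f : Z → ℝ} (hfm : Measurable f)
    (hf : Integrable (fun z => m z * |f z|) ν) :
    Integrable (fun x : S × Z => q x.1 x.2 * f x.2) (μ.prod ν) := by
  have hmeas : AEStronglyMeasurable (fun x : S × Z => q x.1 x.2 * f x.2) (μ.prod ν) :=
    hqi.aestronglyMeasurable.mul (hfm.comp measurable_snd).aestronglyMeasurable
  rw [integrable_prod_iff' hmeas]
  refine ⟨?_, ?_⟩
  · filter_upwards [hqi.prod_left_ae] with z hz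
    exact hz.mul_const _
  · refine hf.congr ?_
    filter_upwards [hm] with z hz
    simp [abs_of_nonneg (hq _ _), integral_mul_const, hz]

/-- **Exact decomposition of the expected log marginal density.**
Setup: σ-finite measure spaces `(S, lamS)` and `(Z, lamZ)`; a prior density `p` on `Z`;
a decoder `g` with `g z ·` a density on `S` for every `z`; joint `π(z,s) = p z * g z s`;
marginal `d s = ∫ z, p z * g z s`; posterior `r z s = p z * g z s / d s` when `d s > 0`;
a probability measure `μ` on `S` with `d > 0` μ-a.e.; an encoder `q₁` with `q₁ s ·` a
density on `Z` for every `s`; a density `q₂` on `Z` matching the μ-marginal of `q₁`.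
Conclusion: `∫ log d dμ = ∫∫ q₁ log g - KL(q₂‖p) + ∫ (KL(q₁(s,·)‖r(·|s)) - KL(q₁(s,·)‖q₂)) dμ`. -/
theorem dasp_evidence_decomposition
    {S Z : Type*} [MeasurableSpace S] [MeasurableSpace Z]
    (lamS : Measure S) (lamZ : Measure Z) [SigmaFinite lamS] [SigmaFinite lamZ]
    -- prior density p on Z
    (p : Z → ℝ) (hp_meas : Measurable p) (hp_nonneg : ∀ z, 0 ≤ p z)
    (hp_one : ∫ z, p z ∂lamZ = 1)
    -- decoder g : Z × S → [0,∞), g z · a probability density on S for each z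
    (g : Z → S → ℝ) (hg_meas : Measurable (Function.uncurry g))
    (hg_nonneg : ∀ z s, 0 ≤ g z s) (hg_one : ∀ z, ∫ s, g z s ∂lamS = 1)
    -- marginal d and posterior r
    (d : S → ℝ) (hd : ∀ s, d s = ∫ z, p z * g z s ∂lamZ)
    (r : Z → S → ℝ) (hr : ∀ z s, 0 < d s → r z s = p z * g z s / d s)
    -- probability measure μ on S with d > 0 μ-a.e.
    (μ : Measure S) [IsProbabilityMeasure μ] (hd_pos : ∀ᵐ s ∂μ, 0 < d s)
    -- encoder q₁, q₁ s · a probability density on Z for each s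
    (q₁ : S → Z → ℝ) (hq₁_meas : Measurable (Function.uncurry q₁))
    (hq₁_nonneg : ∀ s z, 0 ≤ q₁ s z) (hq₁_one : ∀ s, ∫ z, q₁ s z ∂lamZ = 1)
    -- density q₂ on Z
    (q₂ : Z → ℝ) (hq₂_meas : Measurable q₂) (hq₂_nonneg : ∀ z, 0 ≤ q₂ z)
    (hq₂_one : ∫ z, q₂ z ∂lamZ = 1)
    -- marginal-matching condition
    (hmatch : ∀ᵐ z ∂lamZ, ∫ s, q₁ s z ∂μ = q₂ z)
    -- support condition: q₁ vanishes (a.e.) where the joint or q₂ vanishes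
    (hsupp : ∀ᵐ sz ∂(μ.prod lamZ),
      (p sz.2 * g sz.2 sz.1 = 0 ∨ q₂ sz.2 = 0) → q₁ sz.1 sz.2 = 0)
    -- integrability assumptions
    (hint_g : Integrable
      (fun sz : S × Z => q₁ sz.1 sz.2 * |Real.log (g sz.2 sz.1)|) (μ.prod lamZ))
    (hint_q₂ : Integrable
      (fun sz : S × Z => q₁ sz.1 sz.2 * |Real.log (q₁ sz.1 sz.2 / q₂ sz.2)|) (μ.prod lamZ))
    (hint_r : Integrable
      (fun sz : S × Z => q₁ sz.1 sz.2 * |Real.log (q₁ sz.1 sz.2 / r sz.2 sz.1)|) (μ.prod lamZ))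
    (hint_p : Integrable (fun z => q₂ z * |Real.log (q₂ z / p z)|) lamZ)
    (hlogd : Integrable (fun s => Real.log (d s)) μ) :
    ∫ s, Real.log (d s) ∂μ =
      (∫ s, ∫ z, q₁ s z * Real.log (g z s) ∂lamZ ∂μ)
        - (∫ z, q₂ z * Real.log (q₂ z / p z) ∂lamZ)
        + ∫ s, ((∫ z, q₁ s z * Real.log (q₁ s z / r z s) ∂lamZ)
            - ∫ z, q₁ s z * Real.log (q₁ s z / q₂ z) ∂lamZ) ∂μ := by
  have hq_int : Integrable (fun x : S × Z => q₁ x.1 x.2) (μ.prod lamZ) := by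
    simpa using integrable_mul_fst_of_marginal (μ := μ) hq₁_meas hq₁_nonneg hq₁_one
      (integrable_const (1 : ℝ))
  have h_d : Integrable (fun x : S × Z => q₁ x.1 x.2 * Real.log (d x.1)) (μ.prod lamZ) :=
    integrable_mul_fst_of_marginal hq₁_meas hq₁_nonneg hq₁_one hlogd
  have h_p : Integrable (fun x : S × Z => q₁ x.1 x.2 * Real.log (q₂ x.2 / p x.2))
      (μ.prod lamZ) :=
    integrable_mul_snd_of_marginal (f := fun z => Real.log (q₂ z / p z)) hq_int hq₁_nonneg hmatch
      (hq₂_meas.div hp_meas).log hint_p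
  have h_g : Integrable (fun x : S × Z => q₁ x.1 x.2 * Real.log (g x.2 x.1)) (μ.prod lamZ) := by
    refine hint_g.mono ?_ (Filter.Eventually.of_forall fun x => by simp)
    exact (hq₁_meas.mul (hg_meas.comp measurable_swap).log).aestronglyMeasurable
  have h_q₂ : Integrable (fun x : S × Z => q₁ x.1 x.2 * Real.log (q₁ x.1 x.2 / q₂ x.2))
      (μ.prod lamZ) := by
    refine hint_q₂.mono ?_ (Filter.Eventually.of_forall fun x => by simp)
    exact (hq₁_meas.mul
      (hq₁_meas.div (hq₂_meas.comp measurable_snd)).log).aestronglyMeasurable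
  -- The pointwise identity, solved for the posterior term; `r` is not assumed measurable, so its
  -- integrability is read off from the other four terms.
  have key : (fun x : S × Z => q₁ x.1 x.2 * Real.log (d x.1)
        - q₁ x.1 x.2 * Real.log (g x.2 x.1) + q₁ x.1 x.2 * Real.log (q₂ x.2 / p x.2)
        + q₁ x.1 x.2 * Real.log (q₁ x.1 x.2 / q₂ x.2)) =ᵐ[μ.prod lamZ]
      fun x : S × Z => q₁ x.1 x.2 * Real.log (q₁ x.1 x.2 / r x.2 x.1) := by
    filter_upwards [hsupp, Measure.quasiMeasurePreserving_fst.ae hd_pos] with x hx hdx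
    by_cases h0 : q₁ x.1 x.2 = 0
    · simp [h0]
    · have h1 : ¬(p x.2 * g x.2 x.1 = 0 ∨ q₂ x.2 = 0) := fun h => h0 (hx h)
      push Not at h1
      obtain ⟨hpg, hq2⟩ := h1
      have hp0 := left_ne_zero_of_mul hpg
      have hg0 := right_ne_zero_of_mul hpg
      rw [hr _ _ hdx, Real.log_div h0 (div_ne_zero hpg hdx.ne'), Real.log_div hpg hdx.ne',
        Real.log_mul hp0 hg0, Real.log_div h0 hq2, Real.log_div hq2 hp0]
      ring
  have h_r : Integrable (fun x : S × Z => q₁ x.1 x.2 * Real.log (q₁ x.1 x.2 / r x.2 x.1))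
      (μ.prod lamZ) := (((h_d.sub h_g).add h_p).add h_q₂).congr key
  have e_d : ∫ x, q₁ x.1 x.2 * Real.log (d x.1) ∂(μ.prod lamZ) = ∫ s, Real.log (d s) ∂μ := by
    rw [integral_prod _ h_d]
    simp [integral_mul_const, hq₁_one]
  have e_p : ∫ x, q₁ x.1 x.2 * Real.log (q₂ x.2 / p x.2) ∂(μ.prod lamZ)
      = ∫ z, q₂ z * Real.log (q₂ z / p z) ∂lamZ := by
    rw [integral_prod_symm _ h_p]
    refine integral_congr_ae ?_
    filter_upwards [hmatch] with z hz
    simp only [integral_mul_const, hz]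
  have e := integral_congr_ae key
  rw [integral_add (by exact (h_d.sub h_g).add h_p) h_q₂,
    integral_add (by exact h_d.sub h_g) h_p,
    integral_sub h_d h_g, e_d, e_p, integral_prod _ h_g, integral_prod _ h_q₂,
    integral_prod _ h_r] at e
  rw [integral_sub h_r.integral_prod_left h_q₂.integral_prod_left]
  linarith
end

section
/- Under the stated setup, assume additionally the marginal-matching condition ∫_S q₁(s,z) dμ(s) = q₂(z) for λ_Z-a.e. z, that q₁(s,z) = 0 for μ⊗λ_Z-a.e. (s,z) at which π(z,s) = 0 or q₂(z) = 0, and that (s,z) ↦ q₁(s,z)|log(π(z,s)/q₂(z))| and (s,z) ↦ q₁(s,z)|log g(z,s)| are μ⊗λ_Z-integrable and z ↦ q₂(z)|log(q₂(z)/p(z))| is λ_Z-integrable. Then ∫_S ∫_Z q₁(s,z) log( π(z,s) / q₂(z) ) dλ_Z(z) dμ(s) = − KL(q₂‖p) + ∫_S ∫_Z q₁(s,z) log g(z,s) dλ_Z(z) dμ(s). -/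
/-!
Off the set where `q₁` vanishes, the support condition makes `p`, `g` and `q₂` nonzero almost
everywhere, so `q₁ log (p g / q₂) = q₁ log g - q₁ log (q₂ / p)` almost everywhere on the product.
The first two terms are integrable by assumption, hence so is the third, and Fubini applies to all
of them. In the third term the logarithm depends on `z` only; integrating in `s` first and using
the marginal-matching condition turns its integral into `∫ q₂ log (q₂ / p)`.
-/

open MeasureTheory

/-- **Splitting the joint term.** Under the variational setup with marginal-matching
`∫ s, q₁ s z ∂μ = q₂ z` (a.e. `z`), support and integrability conditions, the expected
log-ratio against the joint `π(z,s) = p z * g z s` splits as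
`∫_S ∫_Z q₁ log (π/q₂) = − KL(q₂‖p) + ∫_S ∫_Z q₁ log g`,
where `KL(f‖h) = ∫ f log (f/h)`. -/
theorem double_integral_log_joint_ratio_split
    {S Z : Type*} [MeasurableSpace S] [MeasurableSpace Z]
    (lamS : Measure S) (lamZ : Measure Z) [SigmaFinite lamS] [SigmaFinite lamZ]
    -- prior density p on Z
    (p : Z → ℝ) (hp_meas : Measurable p) (hp_nonneg : ∀ z, 0 ≤ p z)
    (hp_one : ∫ z, p z ∂lamZ = 1)
    -- decoder g : Z × S → [0,∞), g z · a probability density on S for each z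
    (g : Z → S → ℝ) (hg_meas : Measurable (Function.uncurry g))
    (hg_nonneg : ∀ z s, 0 ≤ g z s) (hg_one : ∀ z, ∫ s, g z s ∂lamS = 1)
    -- probability measure μ on S
    (μ : Measure S) [IsProbabilityMeasure μ]
    -- encoder q₁, q₁ s · a probability density on Z for each s
    (q₁ : S → Z → ℝ) (hq₁_meas : Measurable (Function.uncurry q₁))
    (hq₁_nonneg : ∀ s z, 0 ≤ q₁ s z) (hq₁_one : ∀ s, ∫ z, q₁ s z ∂lamZ = 1)
    -- density q₂ on Z
    (q₂ : Z → ℝ) (hq₂_meas : Measurable q₂) (hq₂_nonneg : ∀ z, 0 ≤ q₂ z)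
    (hq₂_one : ∫ z, q₂ z ∂lamZ = 1)
    -- marginal-matching condition
    (hmatch : ∀ᵐ z ∂lamZ, ∫ s, q₁ s z ∂μ = q₂ z)
    -- support condition: q₁ vanishes (a.e.) where the joint or q₂ vanishes
    (hsupp : ∀ᵐ sz ∂(μ.prod lamZ),
      (p sz.2 * g sz.2 sz.1 = 0 ∨ q₂ sz.2 = 0) → q₁ sz.1 sz.2 = 0)
    -- integrability assumptions
    (hint_joint : Integrable
      (fun sz : S × Z =>
        q₁ sz.1 sz.2 * |Real.log (p sz.2 * g sz.2 sz.1 / q₂ sz.2)|) (μ.prod lamZ))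
    (hint_g : Integrable
      (fun sz : S × Z => q₁ sz.1 sz.2 * |Real.log (g sz.2 sz.1)|) (μ.prod lamZ))
    (hint_p : Integrable (fun z => q₂ z * |Real.log (q₂ z / p z)|) lamZ) :
    ∫ s, ∫ z, q₁ s z * Real.log (p z * g z s / q₂ z) ∂lamZ ∂μ =
      - (∫ z, q₂ z * Real.log (q₂ z / p z) ∂lamZ)
        + ∫ s, ∫ z, q₁ s z * Real.log (g z s) ∂lamZ ∂μ := by
  have hm₁ : Measurable fun sz : S × Z => q₁ sz.1 sz.2 := hq₁_meas
  have hmg : Measurable fun sz : S × Z => g sz.2 sz.1 := hg_meas.comp measurable_swap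
  have hJ : Integrable
      (fun sz : S × Z => q₁ sz.1 sz.2 * Real.log (p sz.2 * g sz.2 sz.1 / q₂ sz.2))
      (μ.prod lamZ) := by
    refine hint_joint.mono' (Measurable.aestronglyMeasurable (by fun_prop)) (.of_forall fun sz => ?_)
    rw [norm_mul, Real.norm_of_nonneg (hq₁_nonneg _ _), Real.norm_eq_abs]
  have hG : Integrable (fun sz : S × Z => q₁ sz.1 sz.2 * Real.log (g sz.2 sz.1))
      (μ.prod lamZ) := by
    refine hint_g.mono' (Measurable.aestronglyMeasurable (by fun_prop)) (.of_forall fun sz => ?_)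
    rw [norm_mul, Real.norm_of_nonneg (hq₁_nonneg _ _), Real.norm_eq_abs]
  have hsplit : (fun sz : S × Z => q₁ sz.1 sz.2 * Real.log (g sz.2 sz.1)
        - q₁ sz.1 sz.2 * Real.log (p sz.2 * g sz.2 sz.1 / q₂ sz.2)) =ᵐ[μ.prod lamZ]
      fun sz => q₁ sz.1 sz.2 * Real.log (q₂ sz.2 / p sz.2) := by
    filter_upwards [hsupp] with sz h
    by_cases h0 : q₁ sz.1 sz.2 = 0
    · simp [h0]
    · have h' := mt h h0
      push Not at h'
      obtain ⟨hpg, hq⟩ := h'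
      have hp := left_ne_zero_of_mul hpg
      have hg := right_ne_zero_of_mul hpg
      rw [Real.log_div hpg hq, Real.log_mul hp hg, Real.log_div hq hp]
      ring
  have hK : Integrable (fun sz : S × Z => q₁ sz.1 sz.2 * Real.log (q₂ sz.2 / p sz.2))
      (μ.prod lamZ) := (hG.sub hJ).congr hsplit
  have hKL : ∫ sz, q₁ sz.1 sz.2 * Real.log (q₂ sz.2 / p sz.2) ∂(μ.prod lamZ)
      = ∫ z, q₂ z * Real.log (q₂ z / p z) ∂lamZ := by
    rw [integral_prod_symm _ hK]
    refine integral_congr_ae ?_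
    filter_upwards [hmatch] with z hz
    rw [integral_mul_const, hz]
  have hJ' := integral_prod _ hJ
  have hG' := integral_prod _ hG
  have hdiff := integral_congr_ae hsplit
  rw [integral_sub hG hJ, hKL, hJ', hG'] at hdiff
  linarith
end
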